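/- arXiv:2401.11208 — 5 statements merged into one kernel-verified Lean document; each statement's English description precedes it below -/
import Mathlib

section
/- Let p ∈ ℚ[X] be a monic cubic polynomial that is irreducible over ℚ and has three distinct real roots x₁, x₂, x₃, and whose discriminant is the square of a rational number. Then there exists a unique polynomial q ∈ ℚ[X] of degree at most 2 such that q(x₁) = x₂, q(x₂) = x₃, and q(x₃) = x₁. -/
open Polynomial

/-!
The Lagrange interpolant through `(x₁, x₂)`, `(x₂, x₃)`, `(x₃, x₁)` is the only candidate for `q`;
the point is that its coefficients are rational, and this is Galois descent. An automorphism of the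
splitting field permutes the three roots. It fixes `(x₁ - x₂) * (x₁ - x₃) * (x₂ - x₃)`, which is
rational because its square is a rational square, whereas an odd permutation would change its sign;
so the permutation is even. Even permutations of three letters are rotations and commute with the
cycle `x₁ ↦ x₂ ↦ x₃ ↦ x₁`. Hence the automorphism permutes the three interpolation conditions and
fixes the interpolant.
-/

variable {K L ι : Type*} [Field K] [Field L] [Algebra K L] [Fintype ι]

section Roots

variable {p : K[X]} {v : ι → L}

theorem aroots_eq_map_univ (hv : v.Injective) (hp : p.degree = Fintype.card ι)
    (hroot : ∀ i, aeval (v i) p = 0) : p.aroots L = Finset.univ.val.map v := by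
  refine roots_eq_of_degree_eq_card (S := Finset.univ.map ⟨v, hv⟩) ?_ ?_
  · simpa using hroot
  · rw [Finset.card_map, Finset.card_univ, degree_map, hp]

theorem rootSet_eq_range (hv : v.Injective) (hp : p.degree = Fintype.card ι)
    (hroot : ∀ i, aeval (v i) p = 0) : p.rootSet L = Set.range v := by
  classical
  ext x
  simp [rootSet_def, aroots_eq_map_univ hv hp hroot]

theorem exists_perm_comp_eq (hv : v.Injective) (hp : p.degree = Fintype.card ι)
    (hroot : ∀ i, aeval (v i) p = 0) (σ : Gal(L/K)) : ∃ π : Equiv.Perm ι, σ ∘ v = v ∘ π := by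
  have hmem (i : ι) : σ (v i) ∈ Set.range v := by
    rw [← rootSet_eq_range hv hp hroot, mem_rootSet_of_ne (ne_zero_of_coe_le_degree hp.ge),
      aeval_algHom_apply, hroot, map_zero]
  choose π hπ using hmem
  have hinj : π.Injective := fun i j hij ↦ hv (σ.injective (by rw [← hπ, ← hπ, hij]))
  exact ⟨.ofBijective π (Finite.injective_iff_bijective.1 hinj), funext fun i ↦ (hπ i).symm⟩

theorem isGalois_adjoin_range (hv : v.Injective) (hp : p.degree = Fintype.card ι)
    (hroot : ∀ i, aeval (v i) p = 0) : IsGalois K (IntermediateField.adjoin K (Set.range v)) := by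
  have haroots := aroots_eq_map_univ hv hp hroot
  have hsplits : (p.map (algebraMap K L)).Splits := by
    rw [splits_iff_card_roots, ← aroots_def, haroots, natDegree_map,
      natDegree_eq_of_degree_eq_some hp]
    simp
  have hsep : p.Separable := by
    rw [← nodup_aroots_iff_of_splits (ne_zero_of_coe_le_degree hp.ge) hsplits, haroots]
    exact Finset.univ.nodup.map hv
  rw [← rootSet_eq_range hv hp hroot]
  have := IntermediateField.adjoin_rootSet_isSplittingField hsplits
  exact IsGalois.of_separable_splitting_field hsep

end Roots

section Descent

theorem mem_lifts_of_forall_map_eq [IsGalois K L] {f : L[X]}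
    (hf : ∀ σ : Gal(L/K), f.map (σ : L →+* L) = f) : f ∈ lifts (algebraMap K L) := by
  rw [lifts_iff_coeff_lifts]
  intro n
  rw [InfiniteGalois.mem_range_algebraMap_iff_fixed]
  intro σ
  conv_rhs => rw [← hf σ, coeff_map]
  rfl

theorem degree_lt_and_aeval_eq_iff_map_eq_interpolate [DecidableEq ι] {v r : ι → L}
    (hv : v.Injective) {q : K[X]} :
    (q.degree < Fintype.card ι ∧ ∀ i, aeval (v i) q = r i) ↔
      q.map (algebraMap K L) = Lagrange.interpolate Finset.univ v r := by
  rw [← Lagrange.eq_interpolate_iff r hv.injOn]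
  simp

theorem map_interpolate_eq_self {F : Type*} [Field F] [DecidableEq ι] {v r : ι → F}
    (hv : v.Injective) {σ : F →+* F} (hσ : ∀ i, ∃ j, σ (v j) = v i ∧ σ (r j) = r i) :
    (Lagrange.interpolate Finset.univ v r).map σ = Lagrange.interpolate Finset.univ v r := by
  refine Lagrange.eq_interpolate_of_eval_eq r hv.injOn ?_ fun i _ ↦ ?_
  · rw [degree_map]
    exact Lagrange.degree_interpolate_lt r hv.injOn
  · obtain ⟨j, hvj, hrj⟩ := hσ i
    rw [← hvj, eval_map_apply, Lagrange.eval_interpolate_at_node r hv.injOn (Finset.mem_univ j),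
      hrj]

theorem existsUnique_aeval_eq_of_equivariant [IsGalois K L] {v r : ι → L} (hv : v.Injective)
    (hr : ∀ (σ : Gal(L/K)) i, ∃ j, σ (v i) = v j ∧ σ (r i) = r j) :
    ∃! q : K[X], q.degree < Fintype.card ι ∧ ∀ i, aeval (v i) q = r i := by
  classical
  simp only [degree_lt_and_aeval_eq_iff_map_eq_interpolate hv]
  have hlifts : Lagrange.interpolate Finset.univ v r ∈ lifts (algebraMap K L) := by
    refine mem_lifts_of_forall_map_eq fun σ ↦ map_interpolate_eq_self hv fun i ↦ ?_
    obtain ⟨j, hvj, hrj⟩ := hr σ.symm i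
    exact ⟨j, (σ.symm_apply_eq.1 hvj).symm, (σ.symm_apply_eq.1 hrj).symm⟩
  obtain ⟨q, hq⟩ := (mem_lifts _).1 hlifts
  exact ⟨q, hq, fun q' hq' ↦ map_injective _ (algebraMap K L).injective (hq'.trans hq.symm)⟩

end Descent

section Parity

open Matrix

theorem map_det_vandermonde {R S : Type*} [CommRing R] [CommRing S] (f : R →+* S) {n : ℕ}
    (v : Fin n → R) : f (vandermonde v).det = (vandermonde (f ∘ v)).det := by
  rw [f.map_det]
  congr 1
  ext i j
  simp [vandermonde_apply]

theorem det_vandermonde_fin_three {R : Type*} [CommRing R] (x y z : R) :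
    (vandermonde ![x, y, z]).det = -((x - y) * (x - z) * (y - z)) := by
  simp only [det_fin_three, vandermonde_apply, cons_val, Fin.coe_ofNat_eq_mod]
  ring

theorem sign_eq_one_of_map_det_vandermonde_eq {R : Type*} [CommRing R] [IsDomain R]
    [NeZero (2 : R)] {n : ℕ} {v : Fin n → R} (hv : v.Injective) {σ : R →+* R}
    {π : Equiv.Perm (Fin n)} (hπ : σ ∘ v = v ∘ π)
    (hσ : σ (vandermonde v).det = (vandermonde v).det) : π.sign = 1 := by
  have hperm : σ (vandermonde v).det = π.sign * (vandermonde v).det := by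
    rw [map_det_vandermonde, hπ, ← det_permute]
    rfl
  refine (Int.units_eq_one_or π.sign).resolve_right fun hneg ↦ ?_
  have : (2 : R) * (vandermonde v).det = 0 := by
    rw [hσ, hneg] at hperm
    push_cast at hperm
    linear_combination hperm
  exact mul_ne_zero two_ne_zero (det_vandermonde_ne_zero_iff.2 hv) this

theorem perm_fin_three_apply_add_one_of_sign_eq_one {π : Equiv.Perm (Fin 3)}
    (hπ : π.sign = 1) (i : Fin 3) : π (i + 1) = π i + 1 := by
  decide +revert

end Parity

section Cubic

variable [NeZero (2 : K)] {p : K[X]} {v : Fin 3 → L}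

theorem existsUnique_aeval_eq_apply_add_one_of_isGalois [IsGalois K L] (hv : v.Injective)
    (hp : p.degree = 3) (hroot : ∀ i, aeval (v i) p = 0)
    (hdet : (Matrix.vandermonde v).det ∈ Set.range (algebraMap K L)) :
    ∃! q : K[X], q.degree < 3 ∧ ∀ i, aeval (v i) q = v (i + 1) := by
  have : NeZero (2 : L) := by
    simpa only [map_ofNat] using NeZero.of_injective (a := (2 : K)) (algebraMap K L).injective
  refine existsUnique_aeval_eq_of_equivariant hv fun σ i ↦ ?_
  obtain ⟨π, hπ⟩ := exists_perm_comp_eq hv hp hroot σ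
  have hsign : π.sign = 1 := by
    obtain ⟨d, hd⟩ := hdet
    exact sign_eq_one_of_map_det_vandermonde_eq hv (σ := σ) hπ (by simp [← hd])
  refine ⟨π i, congrFun hπ i, ?_⟩
  rw [← perm_fin_three_apply_add_one_of_sign_eq_one hsign]
  exact congrFun hπ (i + 1)

theorem existsUnique_aeval_eq_apply_add_one (hv : v.Injective) (hp : p.degree = 3)
    (hroot : ∀ i, aeval (v i) p = 0)
    (hdet : (Matrix.vandermonde v).det ∈ Set.range (algebraMap K L)) :
    ∃! q : K[X], q.degree < 3 ∧ ∀ i, aeval (v i) q = v (i + 1) := by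
  obtain ⟨E, hE, hvE⟩ : ∃ E : IntermediateField K L, IsGalois K E ∧ ∀ i, v i ∈ E :=
    ⟨_, isGalois_adjoin_range hv hp hroot,
      fun i ↦ IntermediateField.subset_adjoin K _ (Set.mem_range_self i)⟩
  obtain ⟨w, rfl⟩ : ∃ w : Fin 3 → E, v = algebraMap E L ∘ w := ⟨fun i ↦ ⟨v i, hvE i⟩, rfl⟩
  simp only [Function.comp_apply, aeval_algebraMap_apply, (algebraMap E L).injective.eq_iff,
    map_eq_zero] at hroot ⊢
  refine existsUnique_aeval_eq_apply_add_one_of_isGalois hv.of_comp hp hroot ?_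
  obtain ⟨d, hd⟩ := hdet
  refine ⟨d, (algebraMap E L).injective ?_⟩
  rw [← IsScalarTower.algebraMap_apply, hd, map_det_vandermonde]

end Cubic

theorem stmt0_general [NeZero (2 : K)] {p : K[X]} (hp : p.degree = 3) {x₁ x₂ x₃ : L}
    (h12 : x₁ ≠ x₂) (h13 : x₁ ≠ x₃) (h23 : x₂ ≠ x₃)
    (hx₁ : aeval x₁ p = 0) (hx₂ : aeval x₂ p = 0) (hx₃ : aeval x₃ p = 0)
    (hdisc : ∃ d : K, ((x₁ - x₂) * (x₁ - x₃) * (x₂ - x₃)) ^ 2 = (algebraMap K L d) ^ 2) :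
    ∃! q : K[X], q.degree ≤ 2 ∧ aeval x₁ q = x₂ ∧ aeval x₂ q = x₃ ∧ aeval x₃ q = x₁ := by
  have hinj : Function.Injective ![x₁, x₂, x₃] := by
    simp [Function.Injective, Fin.forall_fin_succ, h12, h13, h23, h12.symm, h13.symm, h23.symm]
  have hroot (i : Fin 3) : aeval (![x₁, x₂, x₃] i) p = 0 := by
    fin_cases i <;> assumption
  have hdet : (Matrix.vandermonde ![x₁, x₂, x₃]).det ∈ Set.range (algebraMap K L) := by
    obtain ⟨d, hd⟩ := hdisc
    rw [det_vandermonde_fin_three]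
    rcases sq_eq_sq_iff_eq_or_eq_neg.1 hd with h | h
    · exact ⟨-d, by rw [h, map_neg]⟩
    · exact ⟨d, by rw [h, neg_neg]⟩
  have hdegree (q : K[X]) : q.degree ≤ 2 ↔ q.degree < 3 := by
    simpa [mem_degreeLE, mem_degreeLT] using
      (SetLike.ext_iff.1 (degreeLT_succ_eq_degreeLE (R := K) (n := 2)) q).symm
  simpa [hdegree, Fin.forall_fin_succ] using existsUnique_aeval_eq_apply_add_one hinj hp hroot hdet

/-- For a monic cubic polynomial over ℚ, irreducible, with three
distinct real roots and whose discriminant is the square of a rational number,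
there exists a unique polynomial `q ∈ ℚ[X]` of degree at most 2 cyclically
permuting the roots: `q(x₁) = x₂`, `q(x₂) = x₃`, `q(x₃) = x₁`. -/
theorem stmt0 (p : ℚ[X]) (hmonic : p.Monic) (hdeg : p.natDegree = 3)
    (hirr : Irreducible p)
    (x₁ x₂ x₃ : ℝ) (h12 : x₁ ≠ x₂) (h13 : x₁ ≠ x₃) (h23 : x₂ ≠ x₃)
    (hx₁ : aeval x₁ p = 0) (hx₂ : aeval x₂ p = 0) (hx₃ : aeval x₃ p = 0)
    (hdisc : ∃ d : ℚ, ((x₁ - x₂) * (x₁ - x₃) * (x₂ - x₃))^2 = (d : ℝ)^2) :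
    ∃! q : ℚ[X], q.degree ≤ 2 ∧
      aeval x₁ q = x₂ ∧ aeval x₂ q = x₃ ∧ aeval x₃ q = x₁ :=
  stmt0_general ((degree_eq_iff_natDegree_eq_of_pos three_pos).2 hdeg) h12 h13 h23 hx₁ hx₂ hx₃ hdisc
end

section
/- Let p = X³ + aX² + bX + c ∈ ℚ[X] be a cubic Galois polynomial (irreducible over ℚ with three distinct real roots and square discriminant). Then 3b ≠ a²; equivalently, the unique polynomial q ∈ ℚ[X] of degree at most 2 that cyclically permutes the roots of p (q(x₁)=x₂, q(x₂)=x₃, q(x₃)=x₁) has degree exactly 2. -/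
/-!
With `u = x₁ - x₂` and `v = x₂ - x₃`, Vieta's formulas give `a² - 3b = u² + uv + v²`. If `q` is
affine with slope `m`, then `x₁ - x₂`, `x₂ - x₃`, `x₃ - x₁` are `u`, `mu`, `m²u` and sum to zero, so
again `u² + uv + v² = u · (u + mu + m²u) = 0`. This form is the norm form of the cube roots of
unity: it has no nontrivial zero over a field in which `X² + X + 1` has no root, such as `ℝ`.
-/

open Polynomial

section Vieta

variable {R : Type*} [CommRing R] [IsDomain R] {a b c x y z : R}

theorem cubic_divided_difference_eq_zero (hxy : x ≠ y)
    (hx : x ^ 3 + a * x ^ 2 + b * x + c = 0) (hy : y ^ 3 + a * y ^ 2 + b * y + c = 0) :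
    x ^ 2 + x * y + y ^ 2 + a * (x + y) + b = 0 :=
  mul_left_cancel₀ (sub_ne_zero.2 hxy) (by linear_combination hx - hy)

theorem vieta_formula_cubic (hxy : x ≠ y) (hxz : x ≠ z) (hyz : y ≠ z)
    (hx : x ^ 3 + a * x ^ 2 + b * x + c = 0) (hy : y ^ 3 + a * y ^ 2 + b * y + c = 0)
    (hz : z ^ 3 + a * z ^ 2 + b * z + c = 0) :
    x + y + z = -a ∧ x * y + x * z + y * z = b ∧ x * y * z = -c := by
  have hdd_xy := cubic_divided_difference_eq_zero hxy hx hy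
  have hdd_xz := cubic_divided_difference_eq_zero hxz hx hz
  have hsum : x + y + z + a = 0 :=
    mul_left_cancel₀ (sub_ne_zero.2 hyz) (by linear_combination hdd_xy - hdd_xz)
  refine ⟨?_, ?_, ?_⟩
  · linear_combination hsum
  · linear_combination (x + y) * hsum - hdd_xy
  · linear_combination hx - x * hdd_xy + x * y * hsum

theorem sq_sub_three_mul_eq_of_cubic_roots (hxy : x ≠ y) (hxz : x ≠ z) (hyz : y ≠ z)
    (hx : x ^ 3 + a * x ^ 2 + b * x + c = 0) (hy : y ^ 3 + a * y ^ 2 + b * y + c = 0)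
    (hz : z ^ 3 + a * z ^ 2 + b * z + c = 0) :
    a ^ 2 - 3 * b = (x - y) ^ 2 + (x - y) * (y - z) + (y - z) ^ 2 := by
  obtain ⟨hsum, hpairs, -⟩ := vieta_formula_cubic hxy hxz hyz hx hy hz
  rw [← hpairs, ← neg_sq a, ← hsum]
  ring

end Vieta

theorem sq_add_mul_add_sq_eq_zero_of_affine_cycle {K L : Type*} [CommSemiring K] [CommRing L]
    [Algebra K L] {q : K[X]} (hq : q.degree ≤ 1) {x y z : L}
    (hxy : aeval x q = y) (hyz : aeval y q = z) (hzx : aeval z q = x) :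
    (x - y) ^ 2 + (x - y) * (y - z) + (y - z) ^ 2 = 0 := by
  obtain ⟨m, n, hmn⟩ : ∃ m n : L, ∀ t, aeval t q = m * t + n :=
    ⟨algebraMap K L (q.coeff 1), algebraMap K L (q.coeff 0), fun t => by
      conv_lhs => rw [eq_X_add_C_of_degree_le_one hq]
      simp⟩
  rw [hmn] at hxy hyz hzx
  have hv : y - z = m * (x - y) := by linear_combination hyz - hxy
  have hw : z - x = m * (y - z) := by linear_combination hzx - hyz
  have hsum : (x - y) + m * (x - y) + m ^ 2 * (x - y) = 0 := by
    linear_combination -hv - hw - m * hv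
  rw [hv]
  linear_combination (x - y) * hsum

theorem sq_add_mul_add_sq_ne_zero {F : Type*} [Field F]
    (hF : ∀ t : F, ¬(cyclotomic 3 F).IsRoot t) {u : F} (hu : u ≠ 0) (v : F) :
    u ^ 2 + u * v + v ^ 2 ≠ 0 := by
  intro h
  apply hF (v / u)
  simp only [cyclotomic_three, IsRoot.def, eval_add, eval_pow, eval_X, eval_one]
  field_simp
  linear_combination h

theorem stmt3_general {K L : Type*} [CommRing K] [Field L] [Algebra K L]
    (hL : ∀ t : L, ¬(cyclotomic 3 L).IsRoot t) {a b c : K} {x₁ x₂ x₃ : L}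
    (h12 : x₁ ≠ x₂) (h13 : x₁ ≠ x₃) (h23 : x₂ ≠ x₃)
    (hx₁ : aeval x₁ (X ^ 3 + C a * X ^ 2 + C b * X + C c) = 0)
    (hx₂ : aeval x₂ (X ^ 3 + C a * X ^ 2 + C b * X + C c) = 0)
    (hx₃ : aeval x₃ (X ^ 3 + C a * X ^ 2 + C b * X + C c) = 0) :
    3 * b ≠ a ^ 2 ∧
    ∀ q : K[X], q.degree ≤ 2 →
      aeval x₁ q = x₂ → aeval x₂ q = x₃ → aeval x₃ q = x₁ →
      q.degree = 2 := by
  have hform : (x₁ - x₂) ^ 2 + (x₁ - x₂) * (x₂ - x₃) + (x₂ - x₃) ^ 2 ≠ 0 :=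
    sq_add_mul_add_sq_ne_zero hL (sub_ne_zero.2 h12) _
  refine ⟨fun hab => hform ?_, fun q hq hq₁ hq₂ hq₃ => ?_⟩
  · simp only [map_add, map_mul, map_pow, aeval_X, aeval_C] at hx₁ hx₂ hx₃
    rw [← sq_sub_three_mul_eq_of_cubic_roots h12 h13 h23 hx₁ hx₂ hx₃, sub_eq_zero,
      ← map_pow, ← hab, map_mul, map_ofNat]
  · by_contra hne
    have hq_affine : q.degree ≤ 1 := Order.le_of_lt_succ (lt_of_le_of_ne hq hne)
    exact hform (sq_add_mul_add_sq_eq_zero_of_affine_cycle hq_affine hq₁ hq₂ hq₃)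

/-- for a cubic Galois polynomial `X³ + aX² + bX + c` one has
`3b ≠ a²`; equivalently any polynomial of degree at most 2 cyclically permuting
the roots has degree exactly 2. -/
theorem stmt3 (a b c : ℚ) (p : ℚ[X])
    (hp : p = X^3 + C a * X^2 + C b * X + C c)
    (hirr : Irreducible p)
    (x₁ x₂ x₃ : ℝ) (h12 : x₁ ≠ x₂) (h13 : x₁ ≠ x₃) (h23 : x₂ ≠ x₃)
    (hx₁ : aeval x₁ p = 0) (hx₂ : aeval x₂ p = 0) (hx₃ : aeval x₃ p = 0)
    (hdisc : ∃ d : ℚ, ((x₁ - x₂) * (x₁ - x₃) * (x₂ - x₃))^2 = (d : ℝ)^2) :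
    3*b ≠ a^2 ∧
    ∀ q : ℚ[X], q.degree ≤ 2 →
      aeval x₁ q = x₂ → aeval x₂ q = x₃ → aeval x₃ q = x₁ →
      q.degree = 2 := by
  subst hp
  exact stmt3_general (fun t => (cyclotomic_pos (by norm_num) t).ne') h12 h13 h23 hx₁ hx₂ hx₃
end

section
/- Let p ∈ ℚ[X] be a cubic Galois polynomial and q ∈ ℚ[X] the quadratic polynomial cyclically permuting its roots. Set s = q(q(q(X))) − X ∈ ℚ[X] (a polynomial of degree 8). Then p divides s, the polynomial q − X divides s, and the remaining factor p₁ = s / (p · (q − X)) is (up to a nonzero rational scalar) a cubic polynomial in ℚ[X] whose three roots are all real and are cyclically permuted by q, and whose discriminant is the square of a rational number. -/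
open Polynomial

/-!
Let `q = a X² + b X + d` permute `x₁ → x₂ → x₃ → x₁`. By `q(x) - q(y) = (x - y) (a (x + y) + b)`,
consecutive differences along the cycle have as quotients the multipliers
`m = a (x₁ + x₂) + b`, `m' = a (x₂ + x₃) + b`, `m''`. Since the differences sum to zero,
`m m' + m + 1 = 0`: the multipliers are permuted by the Möbius map `m ↦ -(m + 1) / m` of order
three, so they are the roots of Shanks' simplest cubic `S_v = X³ - v X² - (v + 3) X - 1`, where `v`
is their sum. As the multiplier opposite `x` is `a (x₁ + x₂ + x₃ - x) + b`, an affine function of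
`x`, the polynomial `q` is affinely conjugate to `σ_v(m) = -m² + v m + v + 2`, which acts on the
roots of `S_v` as the Möbius map does, and `p` becomes `S_v` up to a scalar.

The translation `m ↦ m - 1 - v` conjugates `σ_v` to `σ_{-2-v}`, and
`σ_v³(m) - m = (σ_v(m) - m) S_v(m) S_{-2-v}(m - 1 - v)`. So `p₁` becomes another simplest cubic.
Simplest cubics have a real root (`S_v(-1) = 1`, `S_v(0) = -1`), their roots are permuted by `σ_v`,
and their discriminant is `(v² + 3 v + 9)²`.
-/

section CommRing

variable {R S : Type*} [CommRing R] [CommRing S]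

/-- Shanks' simplest cubic with parameter `v`, evaluated at `m`. It is a function rather than a
polynomial so that it can be applied to an affine polynomial. -/
def shanksCubic (v m : R) : R := m ^ 3 - v * m ^ 2 - (v + 3) * m - 1

/-- The quadratic map that permutes cyclically the roots of `shanksCubic v`. -/
def shanksMap (v m : R) : R := -m ^ 2 + v * m + (v + 2)

/-- A cycle `m₁ → m₂ → m₃ → m₁` of the Möbius map `m ↦ -(m + 1) / m`, written without division;
the points may coincide. -/
structure IsShanksCycle (m₁ m₂ m₃ : R) : Prop where
  rel₁ : m₁ * m₂ + m₁ + 1 = 0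
  rel₂ : m₂ * m₃ + m₂ + 1 = 0
  rel₃ : m₃ * m₁ + m₃ + 1 = 0

theorem map_shanksCubic (f : R →+* S) (v m : R) :
    f (shanksCubic v m) = shanksCubic (f v) (f m) := by
  simp [shanksCubic, map_ofNat f 3]

theorem map_shanksMap (f : R →+* S) (v m : R) : f (shanksMap v m) = shanksMap (f v) (f m) := by
  simp [shanksMap, map_ofNat f 2]

theorem map_shanksCubic_affine (f : R →+* S) (v α β : R) :
    (shanksCubic (C v) (C α * X + C β)).map f =
      shanksCubic (C (f v)) (C (f α) * X + C (f β)) := by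
  rw [← coe_mapRingHom, map_shanksCubic]
  simp only [coe_mapRingHom, Polynomial.map_add, Polynomial.map_mul, map_C, map_X]

theorem map_shanksMap_affine (f : R →+* S) (v α β : R) :
    (shanksMap (C v) (C α * X + C β)).map f = shanksMap (C (f v)) (C (f α) * X + C (f β)) := by
  rw [← coe_mapRingHom, map_shanksMap]
  simp only [coe_mapRingHom, Polynomial.map_add, Polynomial.map_mul, map_C, map_X]

theorem shanksMap_sub_one_sub (v m : R) :
    shanksMap (-2 - v) (m - 1 - v) = shanksMap v m - 1 - v := by
  unfold shanksMap
  ring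

theorem shanksMap_iterate_three_sub_self (v m : R) :
    shanksMap v (shanksMap v (shanksMap v m)) - m =
      (shanksMap v m - m) * (shanksCubic v m * shanksCubic (-2 - v) (m - 1 - v)) := by
  unfold shanksMap shanksCubic
  ring

namespace IsShanksCycle

variable {m₁ m₂ m₃ : R}

theorem map (f : R →+* S) (h : IsShanksCycle m₁ m₂ m₃) : IsShanksCycle (f m₁) (f m₂) (f m₃) where
  rel₁ := by simpa using congrArg f h.rel₁
  rel₂ := by simpa using congrArg f h.rel₂
  rel₃ := by simpa using congrArg f h.rel₃

theorem shanksMap_eq (h : IsShanksCycle m₁ m₂ m₃) : shanksMap (m₁ + m₂ + m₃) m₁ = m₂ := by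
  unfold shanksMap
  linear_combination h.rel₁ + h.rel₃

theorem shanksCubic_eq_prod (h : IsShanksCycle m₁ m₂ m₃) (m : R) :
    shanksCubic (m₁ + m₂ + m₃) m = (m - m₁) * (m - m₂) * (m - m₃) := by
  have he₂ : m₁ * m₂ + m₂ * m₃ + m₃ * m₁ = -(m₁ + m₂ + m₃ + 3) := by
    linear_combination h.rel₁ + h.rel₂ + h.rel₃
  have he₃ : m₁ * m₂ * m₃ = 1 := by
    linear_combination m₃ * h.rel₁ - h.rel₃
  unfold shanksCubic
  linear_combination he₃ - m * he₂

theorem prod_sub_eq (h : IsShanksCycle m₁ m₂ m₃) :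
    (m₁ - m₂) * (m₁ - m₃) * (m₂ - m₃) =
      -((m₁ + m₂ + m₃) ^ 2 + 3 * (m₁ + m₂ + m₃) + 9) := by
  linear_combination (m₁ - m₂ + 3) * h.rel₁ + (m₂ - m₃ + 3) * h.rel₂ + (m₃ - m₁ + 3) * h.rel₃

theorem shanksCubic_affine {α β v x₁ x₂ x₃ : R}
    (h : IsShanksCycle (α * x₁ + β) (α * x₂ + β) (α * x₃ + β))
    (hv : (α * x₁ + β) + (α * x₂ + β) + (α * x₃ + β) = v) :
    shanksCubic (C v) (C α * X + C β) =
      C (α ^ 3) * ((X - C x₁) * (X - C x₂) * (X - C x₃)) := by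
  have hprod := (h.map (C : R →+* R[X])).shanksCubic_eq_prod (C α * X + C β)
  simp only [← C_add, hv] at hprod
  simp only [C_add, C_mul] at hprod
  rw [hprod, C_pow]
  ring

theorem prod_sub_eq_of_affine {α β v x₁ x₂ x₃ : R}
    (h : IsShanksCycle (α * x₁ + β) (α * x₂ + β) (α * x₃ + β))
    (hv : (α * x₁ + β) + (α * x₂ + β) + (α * x₃ + β) = v) :
    α ^ 3 * ((x₁ - x₂) * (x₁ - x₃) * (x₂ - x₃)) = -(v ^ 2 + 3 * v + 9) := by
  have hprod := h.prod_sub_eq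
  rw [hv] at hprod
  linear_combination hprod

end IsShanksCycle

theorem shanksMap_shanksMap_of_root {v m : R} (h : shanksCubic v m = 0) :
    shanksMap v (shanksMap v m) = v - m - shanksMap v m := by
  unfold shanksCubic at h
  unfold shanksMap
  linear_combination (v - m) * h

theorem isShanksCycle_of_root {v m : R} (h : shanksCubic v m = 0) :
    IsShanksCycle m (shanksMap v m) (shanksMap v (shanksMap v m)) := by
  rw [shanksMap_shanksMap_of_root h]
  unfold shanksCubic at h
  unfold shanksMap
  exact ⟨by linear_combination -h, by linear_combination (v + 1 - m) * h, by linear_combination h⟩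

theorem add_shanksMap_add_of_root {v m : R} (h : shanksCubic v m = 0) :
    m + shanksMap v m + shanksMap v (shanksMap v m) = v := by
  rw [shanksMap_shanksMap_of_root h]
  ring

theorem shanksMap_iterate_three_of_root {v m : R} (h : shanksCubic v m = 0) :
    shanksMap v (shanksMap v (shanksMap v m)) = m := by
  rw [← sub_eq_zero, shanksMap_iterate_three_sub_self, h, zero_mul, mul_zero]

section Multiplier

variable {a b d β x₁ x₂ x₃ : R}

-- `-a x₁ + β = a (x₂ + x₃) + b` is the multiplier opposite `x₁`, and similarly for `x₂`, `x₃`.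
theorem isShanksCycle_multiplier [IsDomain R] (h12 : x₁ ≠ x₂) (h13 : x₁ ≠ x₃) (h23 : x₂ ≠ x₃)
    (h₁ : a * x₁ ^ 2 + b * x₁ + d = x₂) (h₂ : a * x₂ ^ 2 + b * x₂ + d = x₃)
    (h₃ : a * x₃ ^ 2 + b * x₃ + d = x₁) (hβ : β = a * (x₁ + x₂ + x₃) + b) :
    IsShanksCycle (-a * x₁ + β) (-a * x₂ + β) (-a * x₃ + β) := by
  subst hβ
  have d₁ : x₂ - x₃ = (x₁ - x₂) * (a * (x₁ + x₂) + b) := by linear_combination h₂ - h₁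
  have d₂ : x₃ - x₁ = (x₂ - x₃) * (a * (x₂ + x₃) + b) := by linear_combination h₃ - h₂
  have d₃ : x₁ - x₂ = (x₃ - x₁) * (a * (x₃ + x₁) + b) := by linear_combination h₁ - h₃
  constructor
  · apply mul_left_cancel₀ (sub_ne_zero.2 h23)
    linear_combination -(a * (x₃ + x₁) + b + 1) * d₂ - d₃
  · apply mul_left_cancel₀ (sub_ne_zero.2 h13.symm)
    linear_combination -(a * (x₁ + x₂) + b + 1) * d₃ - d₁
  · apply mul_left_cancel₀ (sub_ne_zero.2 h12)
    linear_combination -(a * (x₂ + x₃) + b + 1) * d₁ - d₂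

theorem multiplier_add_add (hβ : β = a * (x₁ + x₂ + x₃) + b) :
    (-a * x₁ + β) + (-a * x₂ + β) + (-a * x₃ + β) = 2 * β + b := by
  linear_combination hβ

-- Both sides are quadratic in `X` with the same terms of degree two and one, so it is enough to
-- compare them at `x₁`.
theorem shanksMap_multiplier (h : IsShanksCycle (-a * x₁ + β) (-a * x₂ + β) (-a * x₃ + β))
    (h₁ : a * x₁ ^ 2 + b * x₁ + d = x₂) (hβ : β = a * (x₁ + x₂ + x₃) + b) :
    C (-a) * (C a * X ^ 2 + C b * X + C d) + C β =
      shanksMap (C (2 * β + b)) (C (-a) * X + C β) := by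
  have hx₁ : -a * (a * x₁ ^ 2 + b * x₁ + d) + β = shanksMap (2 * β + b) (-a * x₁ + β) := by
    rw [h₁, ← multiplier_add_add hβ, h.shanksMap_eq]
  have hconst : -a * d + β = shanksMap (2 * β + b) β := by
    unfold shanksMap at hx₁ ⊢
    linear_combination hx₁
  have hconstC := congrArg (C : R →+* R[X]) hconst
  rw [map_shanksMap] at hconstC
  unfold shanksMap at hconstC ⊢
  simp only [map_add, map_mul, map_neg, C_ofNat] at hconstC ⊢
  linear_combination hconstC

end Multiplier

/-- The affine coordinate `α X + β` conjugates `q` to `shanksMap v`: it transports the roots of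
`shanksCubic v`, and the way they are permuted, to `q`. -/
structure IsShanksCoordinate (q : R[X]) (v α β : R) : Prop where
  ne_zero : α ≠ 0
  semiconj : C α * q + C β = shanksMap (C v) (C α * X + C β)

namespace IsShanksCoordinate

variable {q : R[X]} {v α β : R}

theorem sub_one_sub (h : IsShanksCoordinate q v α β) :
    IsShanksCoordinate q (-2 - v) α (β - 1 - v) where
  ne_zero := h.ne_zero
  semiconj := by
    have hshift := shanksMap_sub_one_sub (C v) (C α * X + C β)
    rw [← h.semiconj] at hshift
    simp only [map_sub, map_neg, map_one, C_ofNat]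
    simp only [add_sub_assoc] at hshift
    exact hshift.symm

theorem comp (h : IsShanksCoordinate q v α β) (r : R[X]) :
    C α * q.comp r + C β = shanksMap (C v) (C α * r + C β) := by
  simpa [map_shanksMap] using congrArg (compRingHom r) h.semiconj

theorem aeval_semiconj [Algebra R S] (h : IsShanksCoordinate q v α β) (y : S) :
    algebraMap R S α * aeval y q + algebraMap R S β =
      shanksMap (algebraMap R S v) (algebraMap R S α * y + algebraMap R S β) := by
  simpa [map_shanksMap] using congrArg (aeval (R := R) y).toRingHom h.semiconj

theorem comp_comp_sub_X [IsDomain R] (h : IsShanksCoordinate q v α β) :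
    q.comp (q.comp q) - X =
      (q - X) * (shanksCubic (C v) (C α * X + C β) *
        shanksCubic (C (-2 - v)) (C α * X + C (β - 1 - v))) := by
  apply mul_left_cancel₀ (C_ne_zero.2 h.ne_zero)
  have hiter := shanksMap_iterate_three_sub_self (C v) (C α * X + C β)
  rw [← h.semiconj, ← h.comp, ← h.comp] at hiter
  simp only [map_sub, map_neg, map_one, C_ofNat, ← add_sub_assoc]
  linear_combination hiter

end IsShanksCoordinate

theorem natDegree_comp_comp_sub_X [NoZeroDivisors R] {q : R[X]} (hq : q.natDegree = 2) :
    (q.comp (q.comp q) - X).natDegree = 8 := by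
  have hdeg : (q.comp (q.comp q)).natDegree = 8 := by
    simp [natDegree_comp, hq]
  rw [natDegree_sub_eq_left_of_natDegree_lt (natDegree_X_le.trans_lt (by omega)), hdeg]

theorem eq_prod_X_sub_C_of_monic [IsDomain R] {f : R[X]} {s : Finset R}
    (hf : f.Monic) (hcard : f.natDegree = s.card) (hs : ∀ x ∈ s, f.eval x = 0) :
    f = ∏ x ∈ s, (X - C x) := by
  have hroots : f.roots = s.val :=
    roots_eq_of_natDegree_le_card_of_ne_zero hs hcard.le hf.ne_zero
  rw [← prod_multiset_X_sub_C_of_monic_of_roots_card_eq hf (by simp [hroots, hcard]), hroots,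
    Finset.prod_map_val]

end CommRing

theorem exists_real_root_shanksCubic (v : ℝ) : ∃ m, shanksCubic v m = 0 := by
  have hcont : ContinuousOn (shanksCubic v) (Set.Icc (-1) 0) := by
    unfold shanksCubic
    fun_prop
  obtain ⟨m, -, hm⟩ := intermediate_value_Icc' (by norm_num) hcont
    (show (0 : ℝ) ∈ Set.Icc (shanksCubic v 0) (shanksCubic v (-1)) by
      constructor <;> unfold shanksCubic <;> linarith)
  exact ⟨m, hm⟩

section Field

variable {k K : Type*} [Field k] [Field K] [Algebra k K]

theorem map_eq_prod_three_X_sub_C {p : k[X]} (hmonic : p.Monic) (hdeg : p.natDegree = 3)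
    {x₁ x₂ x₃ : K} (h12 : x₁ ≠ x₂) (h13 : x₁ ≠ x₃) (h23 : x₂ ≠ x₃)
    (hx₁ : aeval x₁ p = 0) (hx₂ : aeval x₂ p = 0) (hx₃ : aeval x₃ p = 0) :
    p.map (algebraMap k K) = (X - C x₁) * (X - C x₂) * (X - C x₃) := by
  classical
  have hprod : p.map (algebraMap k K) = ∏ x ∈ {x₁, x₂, x₃}, (X - C x) :=
    eq_prod_X_sub_C_of_monic (hmonic.map _) (by simp [hdeg, h12, h13, h23])
      (by simp [hx₁, hx₂, hx₃])
  simpa [h12, h13, h23, mul_assoc] using hprod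

theorem algebraMap_nextCoeff_of_map_eq_prod {p : k[X]} {x₁ x₂ x₃ : K}
    (hp : p.map (algebraMap k K) = (X - C x₁) * (X - C x₂) * (X - C x₃)) :
    algebraMap k K p.nextCoeff = -(x₁ + x₂ + x₃) := by
  rw [← nextCoeff_map (algebraMap k K).injective, hp,
    ((monic_X_sub_C x₁).mul (monic_X_sub_C x₂)).nextCoeff_mul (monic_X_sub_C x₃),
    (monic_X_sub_C x₁).nextCoeff_mul (monic_X_sub_C x₂)]
  simp only [nextCoeff_X_sub_C]
  ring

theorem exists_isShanksCoordinate {p q : k[X]} (hmonic : p.Monic) (hdeg : p.natDegree = 3)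
    {x₁ x₂ x₃ : K} (h12 : x₁ ≠ x₂) (h13 : x₁ ≠ x₃) (h23 : x₂ ≠ x₃)
    (hx₁ : aeval x₁ p = 0) (hx₂ : aeval x₂ p = 0) (hx₃ : aeval x₃ p = 0) (hqdeg : q.degree = 2)
    (hq₁ : aeval x₁ q = x₂) (hq₂ : aeval x₂ q = x₃) (hq₃ : aeval x₃ q = x₁) :
    ∃ v α β : k, IsShanksCoordinate q v α β ∧
      shanksCubic (C v) (C α * X + C β) = C α ^ 3 * p := by
  have hp := map_eq_prod_three_X_sub_C hmonic hdeg h12 h13 h23 hx₁ hx₂ hx₃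
  have hsum := algebraMap_nextCoeff_of_map_eq_prod hp
  obtain ⟨a, b, d, ha, rfl⟩ : ∃ a b d : k, a ≠ 0 ∧ q = C a * X ^ 2 + C b * X + C d :=
    ⟨_, _, _, coeff_ne_zero_of_eq_degree hqdeg, eq_quadratic_of_degree_le_two hqdeg.le⟩
  simp only [map_add, map_mul, map_pow, aeval_C, aeval_X] at hq₁ hq₂ hq₃
  obtain ⟨β, hβ⟩ : ∃ β, algebraMap k K β =
      algebraMap k K a * (x₁ + x₂ + x₃) + algebraMap k K b := ⟨b - a * p.nextCoeff, by
        rw [map_sub, map_mul, hsum]; ring⟩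
  have hcycle := isShanksCycle_multiplier h12 h13 h23 hq₁ hq₂ hq₃ hβ
  have hinj : Function.Injective (Polynomial.map (algebraMap k K)) :=
    map_injective _ (algebraMap k K).injective
  have hv : algebraMap k K (2 * β + b) = 2 * algebraMap k K β + algebraMap k K b := by
    rw [map_add, map_mul, map_ofNat]
  refine ⟨2 * β + b, -a, β, ⟨neg_ne_zero.2 ha, hinj ?_⟩, hinj ?_⟩
  · rw [map_shanksMap_affine, hv, map_neg (algebraMap k K), ← shanksMap_multiplier hcycle hq₁ hβ]
    simp
  · rw [map_shanksCubic_affine, hv, map_neg (algebraMap k K),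
      hcycle.shanksCubic_affine (multiplier_add_add hβ)]
    simp [hp]

namespace IsShanksCoordinate

variable {q : k[X]} {v α β : k}

theorem aeval_eq_iff (h : IsShanksCoordinate q v α β) (y z : K) :
    aeval y q = z ↔
      shanksMap (algebraMap k K v) (algebraMap k K α * y + algebraMap k K β) =
        algebraMap k K α * z + algebraMap k K β := by
  have hα : algebraMap k K α ≠ 0 := by simpa using h.ne_zero
  rw [← h.aeval_semiconj, add_left_inj, mul_right_inj' hα]

theorem exists_cycle (h : IsShanksCoordinate q v α β) {m : K}
    (hm : shanksCubic (algebraMap k K v) m = 0) :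
    ∃ y₁ y₂ y₃ : K,
      (shanksCubic (C v) (C α * X + C β)).map (algebraMap k K) =
        C (algebraMap k K α ^ 3) * ((X - C y₁) * (X - C y₂) * (X - C y₃)) ∧
      aeval y₁ q = y₂ ∧ aeval y₂ q = y₃ ∧ aeval y₃ q = y₁ ∧
      (y₁ - y₂) * (y₁ - y₃) * (y₂ - y₃) = algebraMap k K (-(v ^ 2 + 3 * v + 9) / α ^ 3) := by
  have hα : algebraMap k K α ≠ 0 := by simpa using h.ne_zero
  have hsurj : ∀ n, ∃ y, algebraMap k K α * y + algebraMap k K β = n := fun n =>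
    ⟨(n - algebraMap k K β) / algebraMap k K α, by field_simp; ring⟩
  obtain ⟨y₁, rfl⟩ := hsurj m
  obtain ⟨y₂, hy₂⟩ := hsurj (shanksMap (algebraMap k K v) _)
  obtain ⟨y₃, hy₃⟩ := hsurj (shanksMap (algebraMap k K v) _)
  have hcycle := isShanksCycle_of_root hm
  have hsum := add_shanksMap_add_of_root hm
  have hclosed := shanksMap_iterate_three_of_root hm
  rw [← hy₂, ← hy₃] at hcycle hsum hclosed
  refine ⟨y₁, y₂, y₃, ?_, (h.aeval_eq_iff _ _).2 hy₂.symm, (h.aeval_eq_iff _ _).2 hy₃.symm,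
    (h.aeval_eq_iff _ _).2 hclosed, ?_⟩
  · rw [map_shanksCubic_affine, hcycle.shanksCubic_affine hsum]
  · rw [map_div₀, map_pow, eq_div_iff (pow_ne_zero 3 hα), mul_comm,
      hcycle.prod_sub_eq_of_affine hsum]
    simp only [map_neg, map_add, map_mul, map_pow, map_ofNat]

end IsShanksCoordinate

end Field

/-- Every cyclic cubic extension of `k` is generated by a root of some `shanksCubic v`, so `hroot`
says that all of them embed in `K`; this holds if `K` is real closed or algebraically closed. -/
theorem stmt5_general {k K : Type*} [Field k] [Field K] [Algebra k K]
    (hroot : ∀ v : k, ∃ m : K, shanksCubic (algebraMap k K v) m = 0)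
    (p : k[X]) (hmonic : p.Monic) (hdeg : p.natDegree = 3)
    (x₁ x₂ x₃ : K) (h12 : x₁ ≠ x₂) (h13 : x₁ ≠ x₃) (h23 : x₂ ≠ x₃)
    (hx₁ : aeval x₁ p = 0) (hx₂ : aeval x₂ p = 0) (hx₃ : aeval x₃ p = 0)
    (q : k[X]) (hqdeg : q.degree = 2)
    (hq₁ : aeval x₁ q = x₂) (hq₂ : aeval x₂ q = x₃) (hq₃ : aeval x₃ q = x₁)
    (s : k[X]) (hs : s = q.comp (q.comp q) - X) :
    s.natDegree = 8 ∧ p ∣ s ∧ (q - X) ∣ s ∧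
    ∀ p₁ : k[X], p₁ = s / (p * (q - X)) →
      p₁.natDegree = 3 ∧
      ∃ y₁ y₂ y₃ : K,
        p₁.map (algebraMap k K) =
          C (algebraMap k K p₁.leadingCoeff) * (X - C y₁) * (X - C y₂) * (X - C y₃) ∧
        aeval y₁ q = y₂ ∧ aeval y₂ q = y₃ ∧ aeval y₃ q = y₁ ∧
        ∃ δ : k, ((y₁ - y₂) * (y₁ - y₃) * (y₂ - y₃)) ^ 2 = algebraMap k K δ ^ 2 := by
  have hsdeg : s.natDegree = 8 :=
    hs ▸ natDegree_comp_comp_sub_X (natDegree_eq_of_degree_eq_some hqdeg)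
  obtain ⟨v, α, β, hcoord, hp⟩ :=
    exists_isShanksCoordinate hmonic hdeg h12 h13 h23 hx₁ hx₂ hx₃ hqdeg hq₁ hq₂ hq₃
  have hfac : s = p * (q - X) *
      (C (α ^ 3) * shanksCubic (C (-2 - v)) (C α * X + C (β - 1 - v))) := by
    rw [hs, hcoord.comp_comp_sub_X, hp, C_pow]
    ring
  have hs0 : s ≠ 0 := ne_zero_of_natDegree_gt (n := 7) (by omega)
  have hpq : p * (q - X) ≠ 0 := left_ne_zero_of_mul (hfac ▸ hs0)
  refine ⟨hsdeg, hfac ▸ (dvd_mul_right p _).mul_right _, hfac ▸ (dvd_mul_left _ p).mul_right _, ?_⟩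
  intro p₁ hp₁
  rw [hfac, mul_div_cancel_left₀ _ hpq] at hp₁
  obtain ⟨m, hm⟩ := hroot (-2 - v)
  obtain ⟨y₁, y₂, y₃, hmap, hy₁, hy₂, hy₃, hδ⟩ := hcoord.sub_one_sub.exists_cycle hm
  have hg : ((X - C y₁) * (X - C y₂) * (X - C y₃)).Monic :=
    ((monic_X_sub_C _).mul (monic_X_sub_C _)).mul (monic_X_sub_C _)
  have hmap₁ : p₁.map (algebraMap k K) =
      C (algebraMap k K α ^ 6) * ((X - C y₁) * (X - C y₂) * (X - C y₃)) := by
    rw [hp₁, Polynomial.map_mul, hmap, map_C, ← mul_assoc, ← C_mul, map_pow, ← pow_add]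
  refine ⟨?_, y₁, y₂, y₃, ?_, hy₁, hy₂, hy₃, _, congrArg (· ^ 2) hδ⟩
  · have hα := hcoord.ne_zero
    rw [← natDegree_map (algebraMap k K), hmap₁, natDegree_C_mul (by simpa using hα)]
    compute_degree!
  · have hlead : algebraMap k K p₁.leadingCoeff = algebraMap k K α ^ 6 := by
      rw [← leadingCoeff_map, hmap₁, leadingCoeff_mul_monic hg, leadingCoeff_C]
    rw [hmap₁, hlead, mul_assoc, mul_assoc, mul_assoc]

/-- with `s = q(q(q(X))) − X` (of degree 8), both `p` and `q − X`
divide `s`, and the complementary factor `p₁ = s / (p·(q − X))` is a cubic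
polynomial whose three roots are real, are cyclically permuted by `q`, and
whose discriminant is the square of a rational number. -/
theorem stmt5 (p : ℚ[X]) (hmonic : p.Monic) (hdeg : p.natDegree = 3)
    (hirr : Irreducible p)
    (x₁ x₂ x₃ : ℝ) (h12 : x₁ ≠ x₂) (h13 : x₁ ≠ x₃) (h23 : x₂ ≠ x₃)
    (hx₁ : aeval x₁ p = 0) (hx₂ : aeval x₂ p = 0) (hx₃ : aeval x₃ p = 0)
    (hdisc : ∃ d : ℚ, ((x₁ - x₂) * (x₁ - x₃) * (x₂ - x₃))^2 = (d : ℝ)^2)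
    (q : ℚ[X]) (hqdeg : q.degree = 2)
    (hq₁ : aeval x₁ q = x₂) (hq₂ : aeval x₂ q = x₃) (hq₃ : aeval x₃ q = x₁)
    (s : ℚ[X]) (hs : s = q.comp (q.comp q) - X) :
    s.natDegree = 8 ∧ p ∣ s ∧ (q - X) ∣ s ∧
    ∀ p₁ : ℚ[X], p₁ = s / (p * (q - X)) →
      p₁.natDegree = 3 ∧
      ∃ y₁ y₂ y₃ : ℝ,
        p₁.map (algebraMap ℚ ℝ) =
          C (algebraMap ℚ ℝ p₁.leadingCoeff) * (X - C y₁) * (X - C y₂) * (X - C y₃) ∧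
        aeval y₁ q = y₂ ∧ aeval y₂ q = y₃ ∧ aeval y₃ q = y₁ ∧
        ∃ δ : ℚ, ((y₁ - y₂) * (y₁ - y₃) * (y₂ - y₃))^2 = (δ : ℝ)^2 :=
  stmt5_general (k := ℚ) (fun v => exists_real_root_shanksCubic v) p hmonic hdeg x₁ x₂ x₃
    h12 h13 h23 hx₁ hx₂ hx₃ q hqdeg hq₁ hq₂ hq₃ s hs
end

section
/- Let a, k ∈ ℚ with k > 0 and 4a − 27 = k², and suppose p = X³ − aX − a is a cubic Galois polynomial with real roots x₁, x₂, x₃. Then the polynomials q₁ = (3/k)X² − ((k+9)/(2k))X − 2a/k and q₂ = −(3/k)X² + ((9−k)/(2k))X + 2a/k each cyclically permute the roots of p, and they do so in opposite cyclic orders: if q₁(x₁)=x₂, q₁(x₂)=x₃, q₁(x₃)=x₁, then q₂(x₁)=x₃, q₂(x₃)=x₂, q₂(x₂)=x₁. -/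
open Polynomial

/-!
Let `x, y, z` be the roots and `D = (x - y)(x - z)(y - z)`, so that `D ^ 2 = a² (4a - 27) = (ak)²`.
By Vieta's formulas `(x - y)(x - z) = 3x² - a` and `(y - z)² = 4a - 3x²`; multiplying and reducing
modulo `x³ = ax + a` gives `D (y - z) = a (6x² - 9x - 4a)`. If `D = ak`, this expresses `y - z` as a
quadratic in `x`, and together with `y + z = -x` it says `y = q₁(x)`. As `D` is invariant under
cyclic shifts, `q₁` then acts as `x → y → z → x`. Changing the sign of `k` exchanges `q₁` and `q₂`,
and exchanging two roots changes the sign of `D`; so `q₂` acts in the opposite order, and the case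
`D = -ak` is the first one with two of the roots exchanged.
-/

section Vieta

variable {R : Type*} [CommRing R] {a x y z : R}

lemma sub_mul_sub_of_sum_eq_zero (hsum : x + y + z = 0) (hpair : x * y + x * z + y * z = -a) :
    (x - y) * (x - z) = 3 * x ^ 2 - a := by
  linear_combination -2 * x * hsum + hpair

lemma sub_sq_of_sum_eq_zero (hsum : x + y + z = 0) (hpair : x * y + x * z + y * z = -a) :
    (y - z) ^ 2 = 4 * a - 3 * x ^ 2 := by
  linear_combination (y + z + 3 * x) * hsum - 4 * hpair

lemma sub_mul_sub_mul_sub_sq (hsum : x + y + z = 0) (hpair : x * y + x * z + y * z = -a)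
    (hx : x ^ 3 = a * x + a) :
    (x - y) * (x - z) * (y - z) ^ 2 = a * (6 * x ^ 2 - 9 * x - 4 * a) := by
  rw [sub_mul_sub_of_sum_eq_zero hsum hpair, sub_sq_of_sum_eq_zero hsum hpair]
  linear_combination -9 * x * hx

end Vieta

lemma cubic_roots_eq_of_isRoot {R : Type*} [CommRing R] [IsDomain R] {P : Cubic R}
    (hP : P.toPoly ≠ 0) {x y z : R} (hxy : x ≠ y) (hxz : x ≠ z) (hyz : y ≠ z)
    (hx : P.toPoly.IsRoot x) (hy : P.toPoly.IsRoot y) (hz : P.toPoly.IsRoot z) :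
    P.roots = {x, y, z} := by
  classical
  have hval : ({x, y, z} : Finset R).val = {x, y, z} := by
    simp [Multiset.ndinsert_of_notMem, hxy, hxz, hyz]
  rw [Cubic.roots, ← hval]
  refine roots_eq_of_degree_le_card_of_ne_zero (by simpa using ⟨hx, hy, hz⟩) ?_ hP
  rw [Finset.card_eq_three.2 ⟨x, y, z, hxy, hxz, hyz, rfl⟩]
  exact degree_cubic_le

/-- The polynomial `X³ - aX - a`, encoded as a `Cubic` to make the library's Vieta and discriminant
formulas available. -/
def trinomialCubic {R : Type*} [Ring R] (a : R) : Cubic R :=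
  ⟨1, 0, -a, -a⟩

lemma trinomialCubic_toPoly {R : Type*} [Ring R] (a : R) :
    (trinomialCubic a).toPoly = X ^ 3 - C a * X - C a := by
  simp [trinomialCubic, Cubic.toPoly, sub_eq_add_neg]

lemma trinomialCubic_discr {R : Type*} [CommRing R] (a : R) :
    (trinomialCubic a).discr = a ^ 2 * (4 * a - 27) := by
  simp only [trinomialCubic, Cubic.discr]
  ring

/-- The quadratic `(3/k)X² - ((k+9)/(2k))X - 2a/k`. For `4a - 27 = k²` it maps each root of
`X³ - aX - a` to another one; the two signs of `k` give the two cyclic orders of the roots. -/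
noncomputable def cyclicQuadratic {F : Type*} [Field F] (a k : F) : F[X] :=
  C (3 / k) * X ^ 2 - C ((k + 9) / (2 * k)) * X - C (2 * a / k)

/-- The polynomial `q` permutes `x, y, z` cyclically, in this order. The opposite cyclic order is
expressed by exchanging `y` and `z`. -/
def CyclicallyPermutes {R A : Type*} [CommSemiring R] [Semiring A] [Algebra R A]
    (q : R[X]) (x y z : A) : Prop :=
  aeval x q = y ∧ aeval y q = z ∧ aeval z q = x

section Field

variable {F K : Type*} [Field F] [Field K] [Algebra F K] {a k : F} {x y z : K}

lemma cyclicQuadratic_neg (a k : F) :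
    cyclicQuadratic a (-k) = -C (3 / k) * X ^ 2 + C ((9 - k) / (2 * k)) * X + C (2 * a / k) := by
  have hlin : (-k + 9) / (2 * -k) = -((9 - k) / (2 * k)) := by
    rw [mul_neg, div_neg, neg_add_eq_sub]
  simp only [cyclicQuadratic, hlin, div_neg, C_neg]
  ring

lemma aeval_cyclicQuadratic_eq_iff [NeZero (2 : F)] (hk : k ≠ 0) :
    aeval x (cyclicQuadratic a k) = y ↔
      6 * x ^ 2 - (algebraMap F K k + 9) * x - 4 * algebraMap F K a =
        y * (2 * algebraMap F K k) := by
  have hkK : algebraMap F K k ≠ 0 := (_root_.map_ne_zero _).2 hk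
  have h2K : (2 : K) ≠ 0 := by
    simpa only [map_ofNat] using (_root_.map_ne_zero (algebraMap F K)).2 (two_ne_zero (α := F))
  rw [← div_eq_iff (mul_ne_zero h2K hkK)]
  suffices aeval x (cyclicQuadratic a k) =
      (6 * x ^ 2 - (algebraMap F K k + 9) * x - 4 * algebraMap F K a) / (2 * algebraMap F K k) by
    rw [this]
  simp only [cyclicQuadratic, map_sub, map_mul, map_pow, map_div₀, map_add, map_ofNat, aeval_C,
    aeval_X]
  field_simp
  ring

lemma trinomialCubic_map_roots_eq (hxy : x ≠ y) (hxz : x ≠ z) (hyz : y ≠ z)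
    (hx : aeval x (X ^ 3 - C a * X - C a) = 0) (hy : aeval y (X ^ 3 - C a * X - C a) = 0)
    (hz : aeval z (X ^ 3 - C a * X - C a) = 0) :
    ((trinomialCubic a).map (algebraMap F K)).roots = {x, y, z} := by
  have isRoot {t : K} (ht : aeval t (X ^ 3 - C a * X - C a) = 0) :
      ((trinomialCubic a).map (algebraMap F K)).toPoly.IsRoot t := by
    rwa [Cubic.map_toPoly, trinomialCubic_toPoly, IsRoot, eval_map_algebraMap]
  refine cubic_roots_eq_of_isRoot (Cubic.ne_zero_of_a_ne_zero ?_) hxy hxz hyz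
    (isRoot hx) (isRoot hy) (isRoot hz)
  exact (_root_.map_ne_zero _).2 one_ne_zero

lemma trinomialCubic_vieta (h : ((trinomialCubic a).map (algebraMap F K)).roots = {x, y, z}) :
    x + y + z = 0 ∧ x * y + x * z + y * z = -algebraMap F K a ∧ x * y * z = algebraMap F K a := by
  have ha : (trinomialCubic a).a ≠ 0 := one_ne_zero
  have hb := Cubic.b_eq_three_roots ha h
  have hc := Cubic.c_eq_three_roots ha h
  have hd := Cubic.d_eq_three_roots ha h
  simp only [trinomialCubic, map_zero, map_one, map_neg, one_mul] at hb hc hd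
  exact ⟨neg_eq_zero.1 hb.symm, hc.symm, (neg_injective hd).symm⟩

lemma aeval_cyclicQuadratic_eq [NeZero (2 : F)] (ha : a ≠ 0) (hk : k ≠ 0)
    (hroots : ((trinomialCubic a).map (algebraMap F K)).roots = {x, y, z})
    (hD : (x - y) * (x - z) * (y - z) = algebraMap F K (a * k)) :
    aeval x (cyclicQuadratic a k) = y := by
  obtain ⟨hsum, hpair, hprod⟩ := trinomialCubic_vieta hroots
  have hx : x ^ 3 = algebraMap F K a * x + algebraMap F K a := by
    linear_combination x ^ 2 * hsum - x * hpair + hprod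
  rw [map_mul] at hD
  have hdiff : algebraMap F K k * (y - z) = 6 * x ^ 2 - 9 * x - 4 * algebraMap F K a :=
    mul_left_cancel₀ ((_root_.map_ne_zero _).2 ha) <| by
      linear_combination sub_mul_sub_mul_sub_sq hsum hpair hx - (y - z) * hD
  rw [aeval_cyclicQuadratic_eq_iff hk]
  linear_combination -hdiff - algebraMap F K k * hsum

lemma cyclicallyPermutes_cyclicQuadratic [NeZero (2 : F)] (ha : a ≠ 0) (hk : k ≠ 0)
    (hroots : ((trinomialCubic a).map (algebraMap F K)).roots = {x, y, z})
    (hD : (x - y) * (x - z) * (y - z) = algebraMap F K (a * k)) :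
    CyclicallyPermutes (cyclicQuadratic a k) x y z := by
  have rotate (u v w : K) : ({u, v, w} : Multiset K) = {v, w, u} := by
    simp only [Multiset.insert_eq_cons, ← Multiset.singleton_add]
    abel
  have hroots' := hroots.trans (rotate x y z)
  exact ⟨aeval_cyclicQuadratic_eq ha hk hroots hD,
    aeval_cyclicQuadratic_eq ha hk hroots' (by linear_combination hD),
    aeval_cyclicQuadratic_eq ha hk (hroots'.trans (rotate y z x)) (by linear_combination hD)⟩

lemma cyclicallyPermutes_cyclicQuadratic_and_neg [NeZero (2 : F)] (ha : a ≠ 0) (hk : k ≠ 0)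
    (hroots : ((trinomialCubic a).map (algebraMap F K)).roots = {x, y, z})
    (hD : (x - y) * (x - z) * (y - z) = algebraMap F K (a * k)) :
    CyclicallyPermutes (cyclicQuadratic a k) x y z ∧
      CyclicallyPermutes (cyclicQuadratic a (-k)) x z y := by
  refine ⟨cyclicallyPermutes_cyclicQuadratic ha hk hroots hD,
    cyclicallyPermutes_cyclicQuadratic ha (neg_ne_zero.2 hk) ?_ ?_⟩
  · rw [hroots, Multiset.pair_comm y z]
  · rw [mul_neg, map_neg]
    linear_combination -hD

theorem stmt8_general [NeZero (2 : F)] (hak : 4 * a - 27 = k ^ 2)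
    {x₁ x₂ x₃ : K} (h12 : x₁ ≠ x₂) (h13 : x₁ ≠ x₃) (h23 : x₂ ≠ x₃)
    (hx₁ : aeval x₁ (X ^ 3 - C a * X - C a) = 0) (hx₂ : aeval x₂ (X ^ 3 - C a * X - C a) = 0)
    (hx₃ : aeval x₃ (X ^ 3 - C a * X - C a) = 0) :
    (CyclicallyPermutes (cyclicQuadratic a k) x₁ x₂ x₃ ∨
      CyclicallyPermutes (cyclicQuadratic a k) x₁ x₃ x₂) ∧
    (CyclicallyPermutes (cyclicQuadratic a (-k)) x₁ x₂ x₃ ∨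
      CyclicallyPermutes (cyclicQuadratic a (-k)) x₁ x₃ x₂) ∧
    (CyclicallyPermutes (cyclicQuadratic a k) x₁ x₂ x₃ →
      CyclicallyPermutes (cyclicQuadratic a (-k)) x₁ x₃ x₂) := by
  have hlead : (trinomialCubic a).a ≠ 0 := one_ne_zero
  have hroots := trinomialCubic_map_roots_eq h12 h13 h23 hx₁ hx₂ hx₃
  have hdiscr : (trinomialCubic a).discr = (a * k) ^ 2 := by
    rw [trinomialCubic_discr, hak, mul_pow]
  obtain ⟨ha, hk⟩ : a ≠ 0 ∧ k ≠ 0 := by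
    have hne := (Cubic.discr_ne_zero_iff_roots_ne hlead hroots).2 ⟨h12, h13, h23⟩
    rwa [hdiscr, ne_eq, sq_eq_zero_iff, mul_eq_zero, not_or] at hne
  have hD : ((x₁ - x₂) * (x₁ - x₃) * (x₂ - x₃)) ^ 2 = algebraMap F K (a * k) ^ 2 := by
    rw [← map_pow, ← hdiscr, Cubic.discr_eq_prod_three_roots hlead hroots]
    simp only [trinomialCubic, map_one, one_mul]
  rcases sq_eq_sq_iff_eq_or_eq_neg.1 hD with hD | hD
  · obtain ⟨hq₁, hq₂⟩ := cyclicallyPermutes_cyclicQuadratic_and_neg ha hk hroots hD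
    exact ⟨.inl hq₁, .inr hq₂, fun _ ↦ hq₂⟩
  · rw [Multiset.pair_comm] at hroots
    obtain ⟨hq₁, hq₂⟩ := cyclicallyPermutes_cyclicQuadratic_and_neg ha hk hroots
      (by linear_combination -hD)
    exact ⟨.inr hq₁, .inl hq₂, fun h ↦ absurd (h.1.symm.trans hq₁.1) h23⟩

end Field

/-- for a cubic Galois polynomial `p = X³ − aX − a` with
`4a − 27 = k²`, `k > 0`, the quadratics `q₁ = (3/k)X² − ((k+9)/(2k))X − 2a/k`
and `q₂ = −(3/k)X² + ((9−k)/(2k))X + 2a/k` each cyclically permute the roots of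
`p`, and they do so in opposite cyclic orders. -/
theorem stmt8 (a k : ℚ) (hk : 0 < k) (hak : 4*a - 27 = k^2)
    (p : ℚ[X]) (hp : p = X^3 - C a * X - C a) (hirr : Irreducible p)
    (x₁ x₂ x₃ : ℝ) (h12 : x₁ ≠ x₂) (h13 : x₁ ≠ x₃) (h23 : x₂ ≠ x₃)
    (hx₁ : aeval x₁ p = 0) (hx₂ : aeval x₂ p = 0) (hx₃ : aeval x₃ p = 0)
    (q₁ q₂ : ℚ[X])
    (hq₁ : q₁ = C (3/k) * X^2 - C ((k+9)/(2*k)) * X - C (2*a/k))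
    (hq₂ : q₂ = - C (3/k) * X^2 + C ((9-k)/(2*k)) * X + C (2*a/k)) :
    ((aeval x₁ q₁ = x₂ ∧ aeval x₂ q₁ = x₃ ∧ aeval x₃ q₁ = x₁) ∨
     (aeval x₁ q₁ = x₃ ∧ aeval x₃ q₁ = x₂ ∧ aeval x₂ q₁ = x₁)) ∧
    ((aeval x₁ q₂ = x₂ ∧ aeval x₂ q₂ = x₃ ∧ aeval x₃ q₂ = x₁) ∨
     (aeval x₁ q₂ = x₃ ∧ aeval x₃ q₂ = x₂ ∧ aeval x₂ q₂ = x₁)) ∧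
    ((aeval x₁ q₁ = x₂ ∧ aeval x₂ q₁ = x₃ ∧ aeval x₃ q₁ = x₁) →
      (aeval x₁ q₂ = x₃ ∧ aeval x₃ q₂ = x₂ ∧ aeval x₂ q₂ = x₁)) := by
  subst hp hq₁ hq₂
  exact cyclicQuadratic_neg a k ▸ stmt8_general hak h12 h13 h23 hx₁ hx₂ hx₃
end

section
/- Let a, k ∈ ℚ with k > 0 and 4a − 27 = k², and suppose p = X³ − aX − a is a cubic Galois polynomial. Let q₁ = (3/k)X² − ((k+9)/(2k))X − 2a/k and let p₁ ∈ ℚ[X] be the cubic factor of q₁(q₁(q₁(X))) − X complementary to p·(q₁ − X). Then p₁ is linearly equivalent to X³ − bX − b with b = (27/4)·(31k² + 108k + 729)/(2k + 27)²: there exist α, β, λ ∈ ℚ with α ≠ 0, λ ≠ 0 such that λ·p₁(αX + β) = X³ − bX − b. In particular the characteristic number of the class of p₁ is k₁ = 27k/(2k + 27). -/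
/-!
Up to affine conjugacy a quadratic map with a 3-cycle is `f = X² − (t² + t + 2)`, where `t` is the
sum of the cycle, and the points of the cycle are then the roots of a cubic `g t`. The six points of
exact period 3 of `f` form two cycles whose sums add up to `−1`, so
`f∘f∘f − X = g t · g (−1 − t) · (f − X)`. The cubic `g t` has characteristic number `±27/(4t + 3)`.
An affine change of variable turns `q₁` into `f` and `p` into `g t` with `4t + 3 = −27/k`. Hence it
turns `p₁` into `g (−1 − t)`, where `4(−1 − t) + 3 = 27/k + 2 = 27/k₁`.
-/

open Polynomial

section LinearlyEquivalent

variable {K : Type*} [Field K] {p q r : K[X]}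

/-- Linear equivalence of polynomials: `q` arises from `p` by an invertible affine substitution
`X ↦ αX + β` and multiplication by a nonzero scalar. -/
def LinearlyEquivalent (p q : K[X]) : Prop :=
  ∃ α β lam : K, α ≠ 0 ∧ lam ≠ 0 ∧ C lam * p.comp (C α * X + C β) = q

theorem LinearlyEquivalent.symm (h : LinearlyEquivalent p q) : LinearlyEquivalent q p := by
  obtain ⟨α, β, lam, hα, hlam, rfl⟩ := h
  have affine_inv : (C α * X + C β).comp (C α⁻¹ * X + C (-(α⁻¹ * β))) = X := by
    have hC : C α * C α⁻¹ = (1 : K[X]) := by rw [← C_mul, mul_inv_cancel₀ hα, C_1]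
    simp only [add_comp, mul_comp, C_comp, X_comp, C_neg, C_mul]
    linear_combination (X - C β) * hC
  refine ⟨α⁻¹, -(α⁻¹ * β), lam⁻¹, inv_ne_zero hα, inv_ne_zero hlam, ?_⟩
  rw [mul_comp, C_comp, comp_assoc, affine_inv, comp_X, ← mul_assoc, ← C_mul,
    inv_mul_cancel₀ hlam, C_1, one_mul]

theorem LinearlyEquivalent.trans (hpq : LinearlyEquivalent p q) (hqr : LinearlyEquivalent q r) :
    LinearlyEquivalent p r := by
  obtain ⟨α, β, lam, hα, hlam, rfl⟩ := hpq
  obtain ⟨γ, δ, μ, hγ, hμ, rfl⟩ := hqr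
  refine ⟨α * γ, α * δ + β, μ * lam, mul_ne_zero hα hγ, mul_ne_zero hμ hlam, ?_⟩
  have affine_comp : (C α * X + C β).comp (C γ * X + C δ) = C (α * γ) * X + C (α * δ + β) := by
    simp only [add_comp, mul_comp, C_comp, X_comp, C_add, C_mul]
    ring
  rw [mul_comp, C_comp, comp_assoc, affine_comp, C_mul, mul_assoc]

end LinearlyEquivalent

section CommRing

variable {R : Type*} [CommRing R]

/-- The quadratic map `X² + c` possessing a 3-cycle of sum `t`, which forces
`c = −(t² + t + 2)`. -/
noncomputable def threeCycleQuadratic (t : R) : R[X] :=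
  X ^ 2 - C (t ^ 2 + t + 2)

/-- The monic cubic whose roots `xᵢ` form the 3-cycle of sum `t` of `threeCycleQuadratic t`. Its
coefficients follow from Newton's identities, since `∑ xᵢ² = t − 3c` and
`∑ xᵢ³ = ∑ xᵢ xᵢ₊₁ − ct` for `c = −(t² + t + 2)`. -/
noncomputable def threeCycleCubic (t : R) : R[X] :=
  X ^ 3 - C t * X ^ 2 - C (t ^ 2 + 2 * t + 3) * X + C (t ^ 3 + 2 * t ^ 2 + 3 * t + 1)

theorem natDegree_threeCycleQuadratic [Nontrivial R] (t : R) :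
    (threeCycleQuadratic t).natDegree = 2 :=
  natDegree_X_pow_sub_C

theorem natDegree_threeCycleCubic [Nontrivial R] (t : R) : (threeCycleCubic t).natDegree = 3 := by
  unfold threeCycleCubic
  compute_degree!

theorem threeCycleQuadratic_comp_comp_sub_X (t : R) :
    (threeCycleQuadratic t).comp ((threeCycleQuadratic t).comp (threeCycleQuadratic t)) - X =
      threeCycleCubic t * threeCycleCubic (-1 - t) * (threeCycleQuadratic t - X) := by
  simp only [threeCycleQuadratic, threeCycleCubic, sub_comp, pow_comp, X_comp, C_comp]
  simp only [C_add, C_sub, C_neg, C_mul, C_pow, C_1, C_ofNat]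
  ring

theorem affine_comp_quadratic (c d e : R) :
    (C c * X + C e).comp (C c * X ^ 2 + C (2 * e) * X + C d) =
      (X ^ 2 - C (e ^ 2 - e - c * d)).comp (C c * X + C e) := by
  simp only [add_comp, sub_comp, mul_comp, pow_comp, X_comp, C_comp]
  simp only [C_sub, C_mul, C_pow, C_ofNat]
  ring

theorem comp_comp_comp_of_comp_eq_comp {S : Type*} [CommSemiring S] {l q f : S[X]}
    (h : l.comp q = f.comp l) :
    l.comp (q.comp (q.comp q)) = (f.comp (f.comp f)).comp l := by
  rw [← comp_assoc, h, comp_assoc, ← comp_assoc l, h, comp_assoc, h, comp_assoc, comp_assoc]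

theorem affine_comp_sub_affine (c m : R) (r : R[X]) :
    (C c * X + C m).comp r - (C c * X + C m) = C c * (r - X) := by
  simp only [add_comp, mul_comp, C_comp, X_comp]
  ring

theorem comp_comp_sub_X_of_conj_threeCycleQuadratic [IsDomain R] {c m t : R} {q : R[X]}
    (hc : c ≠ 0)
    (hq : (C c * X + C m).comp q = (threeCycleQuadratic t).comp (C c * X + C m)) :
    q.comp (q.comp q) - X =
      (threeCycleCubic t).comp (C c * X + C m) *
        (threeCycleCubic (-1 - t)).comp (C c * X + C m) * (q - X) := by
  have pulled_back := congrArg (comp · (C c * X + C m)) (threeCycleQuadratic_comp_comp_sub_X t)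
  simp only [sub_comp, mul_comp, X_comp] at pulled_back
  rw [← comp_comp_comp_of_comp_eq_comp hq, ← hq, affine_comp_sub_affine,
    affine_comp_sub_affine] at pulled_back
  refine mul_left_cancel₀ (C_ne_zero.mpr hc) ?_
  linear_combination pulled_back

-- The shift by `m` removes the quadratic term; scaling by `c` equates the two other coefficients.
theorem threeCycleCubic_comp_affine {b c m : R} (hc : 4 * m + 1 = -3 * c)
    (hb : b * c ^ 2 = 3 * (4 * m ^ 2 + 2 * m + 1)) :
    (threeCycleCubic (3 * m)).comp (C c * X + C m) = C (c ^ 3) * (X ^ 3 - C b * X - C b) := by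
  have hCc := congrArg (C : R → R[X]) hc
  have hCb := congrArg (C : R → R[X]) hb
  simp only [threeCycleCubic, add_comp, sub_comp, mul_comp, pow_comp, X_comp, C_comp]
  simp only [C_add, C_neg, C_mul, C_pow, C_1, C_ofNat] at hCc hCb ⊢
  linear_combination (4 * C m ^ 2 + 2 * C m + 1) * hCc + C c * (X + 1) * hCb

end CommRing

section Field

variable {K : Type*} [Field K]

theorem four_ne_zero_of_two_ne_zero (h2 : (2 : K) ≠ 0) : (4 : K) ≠ 0 := by
  simpa [show (4 : K) = 2 * 2 by norm_num] using h2

theorem nine_ne_zero_of_three_ne_zero (h3 : (3 : K) ≠ 0) : (9 : K) ≠ 0 := by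
  simpa [show (9 : K) = 3 * 3 by norm_num] using h3

theorem threeCycleCubic_comp_normalizing (h2 : (2 : K) ≠ 0) (h3 : (3 : K) ≠ 0) {b t : K}
    (hb : (4 * b - 27) * (4 * t + 3) ^ 2 = 27 ^ 2) :
    (threeCycleCubic t).comp (C (-(4 * t + 3) / 9) * X + C (t / 3)) =
      C ((-(4 * t + 3) / 9) ^ 3) * (X ^ 3 - C b * X - C b) := by
  have h4 := four_ne_zero_of_two_ne_zero h2
  have h9 := nine_ne_zero_of_three_ne_zero h3
  have linear_coeff : -3 * (-(4 * t + 3) / 9) = 4 * (t / 3) + 1 := by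
    field_simp
    ring
  have const_coeff :
      b * (-(4 * t + 3) / 9) ^ 2 = 3 * (4 * (t / 3) ^ 2 + 2 * (t / 3) + 1) := by
    field_simp
    refine mul_left_cancel₀ h4 ?_
    linear_combination 3 * hb
  simpa only [mul_div_cancel₀ t h3] using threeCycleCubic_comp_affine linear_coeff.symm const_coeff

theorem threeCycleCubic_linearlyEquivalent (h2 : (2 : K) ≠ 0) (h3 : (3 : K) ≠ 0) {b t : K}
    (hb : (4 * b - 27) * (4 * t + 3) ^ 2 = 27 ^ 2) :
    LinearlyEquivalent (threeCycleCubic t) (X ^ 3 - C b * X - C b) := by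
  have h9 := nine_ne_zero_of_three_ne_zero h3
  have ht : 4 * t + 3 ≠ 0 := by
    intro ht
    rw [ht, zero_pow two_ne_zero, mul_zero] at hb
    have h27 : (27 : K) ≠ 0 := by simpa [show (27 : K) = 3 * 9 by norm_num] using ⟨h3, h9⟩
    exact pow_ne_zero 2 h27 hb.symm
  have hα : -(4 * t + 3) / 9 ≠ 0 := div_ne_zero (neg_ne_zero.mpr ht) h9
  refine ⟨_, t / 3, _, hα, inv_ne_zero (pow_ne_zero 3 hα), ?_⟩
  rw [threeCycleCubic_comp_normalizing h2 h3 hb, ← mul_assoc, ← C_mul,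
    inv_mul_cancel₀ (pow_ne_zero 3 hα), C_1, one_mul]

theorem threeCycleCubic_comp_of_charNumber (h2 : (2 : K) ≠ 0) (h3 : (3 : K) ≠ 0)
    {a k t : K} (hk : k ≠ 0) (hak : 4 * a - 27 = k ^ 2) (ht : k * (4 * t + 3) = -27) :
    (threeCycleCubic t).comp (C (3 / k) * X + C (t / 3)) =
      C ((3 / k) ^ 3) * (X ^ 3 - C a * X - C a) := by
  have h9 := nine_ne_zero_of_three_ne_zero h3
  have scale : -(4 * t + 3) / 9 = 3 / k := by
    field_simp
    linear_combination -ht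
  rw [← scale]
  refine threeCycleCubic_comp_normalizing h2 h3 ?_
  linear_combination (4 * t + 3) ^ 2 * hak + (k * (4 * t + 3) - 27) * ht

theorem affine_comp_quadratic_of_charNumber (h2 : (2 : K) ≠ 0) (h3 : (3 : K) ≠ 0)
    {a k t : K} (hk : k ≠ 0) (hak : 4 * a - 27 = k ^ 2) (ht : k * (4 * t + 3) = -27) :
    (C (3 / k) * X + C (t / 3)).comp
        (C (3 / k) * X ^ 2 - C ((k + 9) / (2 * k)) * X - C (2 * a / k)) =
      (threeCycleQuadratic t).comp (C (3 / k) * X + C (t / 3)) := by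
  have linear_coeff : 2 * (t / 3) = -((k + 9) / (2 * k)) := by
    field_simp
    linear_combination ht
  have translation : (t / 3) ^ 2 - t / 3 - 3 / k * -(2 * a / k) = t ^ 2 + t + 2 := by
    field_simp
    refine mul_left_cancel₀ h2 ?_
    linear_combination 27 * hak - (k * (4 * t + 3) - 27) * ht
  have conj := affine_comp_quadratic (3 / k) (-(2 * a / k)) (t / 3)
  rw [linear_coeff, translation, C_neg, C_neg, neg_mul, ← sub_eq_add_neg, ← sub_eq_add_neg] at conj
  exact conj

theorem linearlyEquivalent_cofactor {c m t w : K} {p q r : K[X]} (hc : c ≠ 0)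
    (hq : (C c * X + C m).comp q = (threeCycleQuadratic t).comp (C c * X + C m))
    (hp : (threeCycleCubic t).comp (C c * X + C m) = C w * p)
    (hr : q.comp (q.comp q) - X = p * (q - X) * r) :
    LinearlyEquivalent (threeCycleCubic (-1 - t)) r := by
  have wp_ne_zero : C w * p ≠ 0 := by
    refine ne_zero_of_natDegree_gt (n := 0) ?_
    rw [← hp, natDegree_comp, natDegree_threeCycleCubic, natDegree_linear hc]
    norm_num
  have q_ne_X : q ≠ X := by
    rintro rfl
    have degrees := congrArg natDegree hq
    rw [comp_X, natDegree_comp, natDegree_threeCycleQuadratic, natDegree_linear hc] at degrees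
    norm_num at degrees
  refine ⟨c, m, w, hc, C_ne_zero.mp (left_ne_zero_of_mul wp_ne_zero), ?_⟩
  have factor := comp_comp_sub_X_of_conj_threeCycleQuadratic hc hq
  rw [hp] at factor
  have p_ne_zero : p ≠ 0 := right_ne_zero_of_mul wp_ne_zero
  refine mul_left_cancel₀ (mul_ne_zero p_ne_zero (sub_ne_zero.mpr q_ne_X)) ?_
  linear_combination hr - factor

theorem charNumber_sq_of_coupled (h2 : (2 : K) ≠ 0) {b k : K} (hk₁ : 2 * k + 27 ≠ 0)
    (hb : b = (27 / 4) * (31 * k ^ 2 + 108 * k + 729) / (2 * k + 27) ^ 2) :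
    4 * b - 27 = (27 * k / (2 * k + 27)) ^ 2 := by
  have four_mul_b : 4 * b = 27 * (31 * k ^ 2 + 108 * k + 729) / (2 * k + 27) ^ 2 := by
    rw [hb, mul_div_assoc', ← mul_assoc, mul_div_cancel₀ _ (four_ne_zero_of_two_ne_zero h2)]
  rw [four_mul_b, div_pow, div_sub' (pow_ne_zero 2 hk₁)]
  ring

end Field

theorem stmt9_general {K : Type*} [Field K] (h2 : (2 : K) ≠ 0) (h3 : (3 : K) ≠ 0)
    {a k : K} (hk : k ≠ 0) (hk₁ : 2 * k + 27 ≠ 0) (hak : 4 * a - 27 = k ^ 2)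
    {p : K[X]} (hp : p = X ^ 3 - C a * X - C a)
    {q₁ : K[X]} (hq₁ : q₁ = C (3 / k) * X ^ 2 - C ((k + 9) / (2 * k)) * X - C (2 * a / k))
    {p₁ : K[X]} (hp₁ : q₁.comp (q₁.comp q₁) - X = p * (q₁ - X) * p₁)
    {b : K} (hb : b = (27 / 4) * (31 * k ^ 2 + 108 * k + 729) / (2 * k + 27) ^ 2) :
    LinearlyEquivalent p₁ (X ^ 3 - C b * X - C b) ∧
      4 * b - 27 = (27 * k / (2 * k + 27)) ^ 2 := by
  have h4 := four_ne_zero_of_two_ne_zero h2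
  have charNumber := charNumber_sq_of_coupled h2 hk₁ hb
  obtain ⟨t, ht⟩ : ∃ t : K, k * (4 * t + 3) = -27 := ⟨(-27 / k - 3) / 4, by field_simp; ring⟩
  have q₁_conj := affine_comp_quadratic_of_charNumber h2 h3 hk hak ht
  have p_conj := threeCycleCubic_comp_of_charNumber h2 h3 hk hak ht
  rw [← hq₁] at q₁_conj
  rw [← hp] at p_conj
  have p₁_equiv : LinearlyEquivalent (threeCycleCubic (-1 - t)) p₁ :=
    linearlyEquivalent_cofactor (div_ne_zero h3 hk) q₁_conj p_conj hp₁
  have other_sum : k * (4 * (-1 - t) + 3) = 2 * k + 27 := by linear_combination -ht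
  refine ⟨p₁_equiv.symm.trans (threeCycleCubic_linearlyEquivalent h2 h3 ?_), charNumber⟩
  rw [charNumber, ← mul_pow, div_mul_eq_mul_div, mul_assoc, other_sum, mul_div_cancel_right₀ _ hk₁]

/-- the coupled polynomial `p₁` of `p = X³ − aX − a`
(via `q₁`) is linearly equivalent to `X³ − bX − b` with
`b = (27/4)(31k² + 108k + 729)/(2k + 27)²`, and the characteristic number of
its class is `k₁ = 27k/(2k + 27)`. -/
theorem stmt9 (a k : ℚ) (hk : 0 < k) (hak : 4*a - 27 = k^2)
    (p : ℚ[X]) (hp : p = X^3 - C a * X - C a) (hirr : Irreducible p)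
    (x₁ x₂ x₃ : ℝ) (h12 : x₁ ≠ x₂) (h13 : x₁ ≠ x₃) (h23 : x₂ ≠ x₃)
    (hx₁ : aeval x₁ p = 0) (hx₂ : aeval x₂ p = 0) (hx₃ : aeval x₃ p = 0)
    (q₁ : ℚ[X]) (hq₁ : q₁ = C (3/k) * X^2 - C ((k+9)/(2*k)) * X - C (2*a/k))
    (p₁ : ℚ[X]) (hp₁ : q₁.comp (q₁.comp q₁) - X = p * (q₁ - X) * p₁)
    (b : ℚ) (hb : b = (27/4) * (31*k^2 + 108*k + 729)/(2*k + 27)^2) :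
    (∃ α β lam : ℚ, α ≠ 0 ∧ lam ≠ 0 ∧
      C lam * p₁.comp (C α * X + C β) = X^3 - C b * X - C b) ∧
    4*b - 27 = (27*k/(2*k + 27))^2 :=
  stmt9_general two_ne_zero three_ne_zero hk.ne' (by positivity) hak hp hq₁ hp₁ hb
end
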